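/- Let δ = 0 or 1/2. Define operators on 𝒱(δ) by L̄_k = (1-2δ)/16 · δ_{k,0} + (1/2)Σ_{j∈ℤ+δ} j :ψ_{-j}ψ_{j+k}: for k ∈ ℤ, where the normal ordering is :ψ_jψ_k: = ψ_jψ_k if k ≥ j and -ψ_kψ_j if k < j. Then setting L_k·v = L̄_k·v and c·v = (1/2)v makes 𝒱(δ) an S(δ)-module; in particular, as operators on 𝒱(δ), [L̄_m, L̄_n] = (m-n)L̄_{m+n} + δ_{m,-n}(m³-m)/24 and [L̄_m, ψ_n] = (-n - m/2)ψ_{m+n} for all m ∈ ℤ, n ∈ ℤ+δ. -/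

import Mathlib

/-!
The operators `ψ_n` are the creation and annihilation operators of the exterior algebra (with
`ψ_0 = (ξ_0 + ∂_0)/√2` when `δ = 0`), so the anticommutators `psi_psi` come from the elementary
sign computations for `ξ_a` and `∂_b`.

On a fixed vector `L̄_k` is a finite sum `Lcut` of normally ordered products, the cutoff being
arbitrary as long as it is large enough (`Lbar_eventually`).  Normal ordering changes a product of
two fermions by a scalar only, so `[L̄_m, ψ_n]` is computed term by term; exactly two terms of the
sum survive (`Lbar_psi`).

For the Virasoro relation let `D = [L̄_m, L̄_n] - (m - n) L̄_{m+n}` (`defect`).  By the previous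
relation `D` commutes with every `ψ_r`, and it preserves parity.  Hence `D` sends the vacuum to an
even vector annihilated by all positive modes, that is, to a multiple of the vacuum, and since the
fermions generate `𝒱(δ)` from the vacuum, `D` is that scalar (`scalar_of_comm`).  The scalar is the
vacuum expectation value of `D`: if `n ≥ 0` or `m ≤ 0`, then `L̄_m L̄_n` has an expectation value
read off from `L̄_n · 1` or from the dual statement, and for `m > 0 > n` it is a finite sum of
two-point functions, equal by `central_sum` to `(m³ - m)/24 + 2m (1 - 2δ)/16` when `n = -m` and to
`0` otherwise.
-/

noncomputable section

/-- Index set for the standard basis of the exterior algebra `𝒱 = 𝒱(0)`: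
the basis vector `ξ_J = ξ_{i₁}⋯ξ_{i_k}` corresponds to the finite set
`J = {i₁ < ⋯ < i_k} ⊆ ℤ_{≥0}`. -/
abbrev VB := Finset ℕ

/-- The underlying space of the exterior algebra `𝒱`, with basis `ξ_J`, `J ∈ VB`. -/
abbrev VV := VB →₀ ℂ

/-- The sign `(-1)^{|{i ∈ J : i < n}|}`. -/
def sgn (J : VB) (n : ℕ) : ℂ := (-1) ^ (J.filter (fun i => i < n)).card

/-- The even part of `𝒱`, spanned by the `ξ_J` with `|J|` even. -/
def evenV : Submodule ℂ VV where
  carrier := {f | ∀ J ∈ f.support, Even J.card}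
  zero_mem' := by intro J hJ; simp at hJ
  add_mem' := by
    intro f g hf hg J hJ
    rcases Finset.mem_union.mp (Finsupp.support_add hJ) with h | h
    · exact hf J h
    · exact hg J h
  smul_mem' := by
    intro c f hf J hJ
    exact hf J (Finsupp.support_smul hJ)

/-- The odd part of `𝒱`, spanned by the `ξ_J` with `|J|` odd. -/
def oddV : Submodule ℂ VV where
  carrier := {f | ∀ J ∈ f.support, ¬ Even J.card}
  zero_mem' := by intro J hJ; simp at hJ
  add_mem' := by
    intro f g hf hg J hJ
    rcases Finset.mem_union.mp (Finsupp.support_add hJ) with h | h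
    · exact hf J h
    · exact hg J h
  smul_mem' := by
    intro c f hf J hJ
    exact hf J (Finsupp.support_smul hJ)

/-- `2δ` as an integer (`0` for `δ = 0`, `1` for `δ = 1/2`). -/
def e2d (δ : ℚ) : ℤ := if δ = 0 then 0 else 1

/-- The action of `ψ_{m+δ}` on the basis vector `ξ_J` of the exterior algebra `𝒱(δ)`
(the basis index `n ∈ ℤ_{≥0}` stands for the generator `ξ_{n+δ}`):  for `m + δ > 0` it is
the odd derivation `∂/∂ξ_{m+δ}`, for `m + δ < 0` it is multiplication by `ξ_{-(m+δ)}`,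
and for `m + δ = 0` (only when `δ = 0`) it is `ψ_0 = (1/√2)(ξ_0 + ∂/∂ξ_0)`. -/
def psiFunD (δ : ℚ) (m : ℤ) (J : VB) : VV :=
  if 0 < (m : ℚ) + δ then
    (if m.toNat ∈ J then sgn J m.toNat • Finsupp.single (J.erase m.toNat) 1 else 0)
  else if (m : ℚ) + δ < 0 then
    (if (-m - e2d δ).toNat ∈ J then 0
     else sgn J (-m - e2d δ).toNat • Finsupp.single (insert (-m - e2d δ).toNat J) 1)
  else
    ((Real.sqrt 2 : ℂ))⁻¹ •
      (if 0 ∈ J then Finsupp.single (J.erase 0) 1 else Finsupp.single (insert 0 J) 1)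

/-- The operator `ψ_{m+δ}` on `𝒱(δ)`. -/
def psiVD (δ : ℚ) (m : ℤ) : VV →ₗ[ℂ] VV := Finsupp.lift VV ℂ VB (psiFunD δ m)

/-- The normally ordered product `:ψ_{-j} ψ_{j+k}:` for `j = t + δ`, `k ∈ ℤ`:
it equals `ψ_{-j} ψ_{j+k}` if `j + k ≥ -j` and `-ψ_{j+k} ψ_{-j}` otherwise. -/
def nopD (δ : ℚ) (t k : ℤ) : VV →ₗ[ℂ] VV :=
  if 0 ≤ (k : ℚ) + 2 * t + 2 * δ then psiVD δ (-t - e2d δ) ∘ₗ psiVD δ (t + k)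
  else - (psiVD δ (t + k) ∘ₗ psiVD δ (-t - e2d δ))

/-- The value of the vertex operator
`L̄_k = (1-2δ)/16·δ_{k,0} + (1/2)·Σ_{j ∈ ℤ+δ} j :ψ_{-j}ψ_{j+k}:` on the basis vector
`ξ_J`.  On `ξ_J` all but finitely many summands vanish, and all the nonzero summands
have `|j|` at most `sup J + |k| + 2`, so the sum below is the full (infinite) sum. -/
def LbarFunD (δ : ℚ) (k : ℤ) (J : VB) : VV :=
  (((1 - 2 * δ : ℚ) : ℂ) / 16) • (if k = 0 then Finsupp.single J 1 else 0) +
  (1 / 2 : ℂ) •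
    ∑ t ∈ Finset.Icc (-(((J.sup id : ℕ) : ℤ) + (k.natAbs : ℤ) + 2)) (((J.sup id : ℕ) : ℤ) + (k.natAbs : ℤ) + 2),
      (((t : ℚ) + δ : ℚ) : ℂ) • nopD δ t k (Finsupp.single J 1)

/-- The vertex operator `L̄_k` on `𝒱(δ)`. -/
def LbarD (δ : ℚ) (k : ℤ) : VV →ₗ[ℂ] VV := Finsupp.lift VV ℂ VB (LbarFunD δ k)

/-- An `S(δ)`-module structure on a fixed `ℤ/2`-graded complex vector space `V`
(`δ = 0` or `1/2`): operators `L m` (even, `m ∈ ℤ`), `ψ n` (odd; the index `n : ℤ`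
stands for `ψ_{n+δ}`) and central elements `c, z` (even) satisfying the defining
relations of the Fermion–Virasoro algebra `S(δ)`. -/
structure SdRepOn (δ : ℚ) (V : Type) [AddCommGroup V] [Module ℂ V] where
  L : ℤ → V →ₗ[ℂ] V
  ψ : ℤ → V →ₗ[ℂ] V
  c : V →ₗ[ℂ] V
  z : V →ₗ[ℂ] V
  even : Submodule ℂ V
  odd : Submodule ℂ V
  isCompl_even_odd : IsCompl even odd
  L_maps_even : ∀ (m : ℤ), ∀ v ∈ even, L m v ∈ even
  L_maps_odd : ∀ (m : ℤ), ∀ v ∈ odd, L m v ∈ odd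
  ψ_maps_even : ∀ (n : ℤ), ∀ v ∈ even, ψ n v ∈ odd
  ψ_maps_odd : ∀ (n : ℤ), ∀ v ∈ odd, ψ n v ∈ even
  c_maps_even : ∀ v ∈ even, c v ∈ even
  c_maps_odd : ∀ v ∈ odd, c v ∈ odd
  z_maps_even : ∀ v ∈ even, z v ∈ even
  z_maps_odd : ∀ v ∈ odd, z v ∈ odd
  rel_LL : ∀ m n : ℤ, L m ∘ₗ L n - L n ∘ₗ L m =
    ((m : ℂ) - (n : ℂ)) • L (m + n) +
      (if m + n = 0 then (((m : ℂ) ^ 3 - (m : ℂ)) / 12) • c else 0)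
  rel_Lψ : ∀ m n : ℤ, L m ∘ₗ ψ n - ψ n ∘ₗ L m =
    (-((((n : ℚ) + δ : ℚ) : ℂ)) - (m : ℂ) / 2) • ψ (m + n)
  rel_ψψ : ∀ m n : ℤ, ψ m ∘ₗ ψ n + ψ n ∘ₗ ψ m =
    if ((m : ℚ) + δ) + ((n : ℚ) + δ) = 0 then z else 0
  c_comm_L : ∀ m : ℤ, c ∘ₗ L m = L m ∘ₗ c
  c_comm_ψ : ∀ n : ℤ, c ∘ₗ ψ n = ψ n ∘ₗ c
  z_comm_L : ∀ m : ℤ, z ∘ₗ L m = L m ∘ₗ z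
  z_comm_ψ : ∀ n : ℤ, z ∘ₗ ψ n = ψ n ∘ₗ z
  c_comm_z : c ∘ₗ z = z ∘ₗ c

/-! ### Creation and annihilation operators -/

/-- The odd derivation `∂/∂ξ_a` of the exterior algebra. -/
def annih (a : ℕ) : VV →ₗ[ℂ] VV :=
  Finsupp.lift VV ℂ VB fun J =>
    if a ∈ J then sgn J a • Finsupp.single (J.erase a) 1 else 0

/-- Left multiplication by `ξ_a` on the exterior algebra. -/
def creat (a : ℕ) : VV →ₗ[ℂ] VV :=
  Finsupp.lift VV ℂ VB fun J =>
    if a ∈ J then 0 else sgn J a • Finsupp.single (insert a J) 1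

lemma lift_single (f : VB → VV) (J : VB) :
    Finsupp.lift VV ℂ VB f (Finsupp.single J 1) = f J := by
  simp [Finsupp.lift_apply]

lemma annih_single (a : ℕ) (J : VB) : annih a (Finsupp.single J 1) =
    if a ∈ J then sgn J a • Finsupp.single (J.erase a) 1 else 0 := lift_single _ _

lemma creat_single (a : ℕ) (J : VB) : creat a (Finsupp.single J 1) =
    if a ∈ J then 0 else sgn J a • Finsupp.single (insert a J) 1 := lift_single _ _

/-- Two operators on the exterior algebra agree if they agree on every `ξ_J`. -/
lemma op_ext {S T : VV →ₗ[ℂ] VV}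
    (h : ∀ J : VB, S (Finsupp.single J 1) = T (Finsupp.single J 1)) : S = T := by
  refine Finsupp.lhom_ext' fun J => LinearMap.ext_ring ?_
  simpa using h J

lemma sgn_sq (J : VB) (a : ℕ) : sgn J a * sgn J a = 1 := by
  unfold sgn
  rw [← pow_add, ← two_mul, pow_mul]
  simp

lemma sgn_insert {J : VB} {b : ℕ} (hb : b ∉ J) (a : ℕ) :
    sgn (insert b J) a = if b < a then -sgn J a else sgn J a := by
  unfold sgn
  rw [Finset.filter_insert]
  split_ifs with h
  · rw [Finset.card_insert_of_notMem (by simp [hb]), pow_succ]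
    ring
  · rfl

lemma sgn_erase {J : VB} {b : ℕ} (hb : b ∈ J) (a : ℕ) :
    sgn (J.erase b) a = if b < a then -sgn J a else sgn J a := by
  have h := sgn_insert (Finset.notMem_erase b J) a
  rw [Finset.insert_erase hb] at h
  split_ifs at h ⊢
  · rw [h, neg_neg]
  · exact h.symm

lemma annih_annih (a b : ℕ) : annih a ∘ₗ annih b + annih b ∘ₗ annih a = 0 := by
  refine op_ext fun J => ?_
  simp only [LinearMap.add_apply, LinearMap.comp_apply, LinearMap.zero_apply, annih_single]
  rcases eq_or_ne a b with rfl | hab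
  · by_cases ha : a ∈ J <;> simp [-Finsupp.smul_single, ha, annih_single]
  · by_cases ha : a ∈ J <;> by_cases hb : b ∈ J <;>
      simp [-Finsupp.smul_single, ha, hb, annih_single, hab, hab.symm, sgn_erase, Finset.erase_right_comm (a := a) (b := b)]
    rw [smul_smul, smul_smul, mul_comm (sgn J b)]
    rcases lt_or_gt_of_ne hab with h | h <;>
      rw [if_pos h, if_neg (not_lt.mpr h.le)] <;> abel

lemma creat_creat (a b : ℕ) : creat a ∘ₗ creat b + creat b ∘ₗ creat a = 0 := by
  refine op_ext fun J => ?_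
  simp only [LinearMap.add_apply, LinearMap.comp_apply, LinearMap.zero_apply, creat_single]
  rcases eq_or_ne a b with rfl | hab
  · by_cases ha : a ∈ J <;> simp [-Finsupp.smul_single, ha, creat_single]
  · by_cases ha : a ∈ J <;> by_cases hb : b ∈ J <;>
      simp [-Finsupp.smul_single, ha, hb, creat_single, hab, hab.symm, sgn_insert, Finset.insert_comm a b]
    rw [smul_smul, smul_smul, mul_comm (sgn J b)]
    rcases lt_or_gt_of_ne hab with h | h <;>
      rw [if_pos h, if_neg (not_lt.mpr h.le)] <;> abel

lemma annih_creat (a b : ℕ) :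
    annih a ∘ₗ creat b + creat b ∘ₗ annih a = if a = b then LinearMap.id else 0 := by
  refine op_ext fun J => ?_
  simp only [LinearMap.add_apply, LinearMap.comp_apply, creat_single, annih_single]
  rcases eq_or_ne a b with rfl | hab
  · by_cases ha : a ∈ J <;>
      simp [-Finsupp.smul_single, ha, creat_single, annih_single, sgn_insert, sgn_erase, smul_smul, sgn_sq]
  · by_cases ha : a ∈ J <;> by_cases hb : b ∈ J <;>
      simp [-Finsupp.smul_single, ha, hb, creat_single, annih_single, hab, hab.symm, sgn_insert, sgn_erase]
    rw [Finset.erase_insert_of_ne hab.symm, smul_smul, smul_smul, mul_comm (sgn J b)]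
    rcases lt_or_gt_of_ne hab with h | h <;>
      rw [if_pos h, if_neg (not_lt.mpr h.le)] <;> abel

lemma creat_annih (a b : ℕ) :
    creat a ∘ₗ annih b + annih b ∘ₗ creat a = if a = b then LinearMap.id else 0 := by
  rw [add_comm, annih_creat]
  simp only [eq_comm]

/-! ### The Fermion relations -/

lemma e2d_cases {δ : ℚ} (hδ : δ = 0 ∨ δ = 1/2) :
    (e2d δ = 0 ∨ e2d δ = 1) ∧ δ = (e2d δ : ℚ) / 2 := by
  rcases hδ with rfl | rfl <;> norm_num [e2d]

lemma pos_iff {δ : ℚ} (hδ : δ = 0 ∨ δ = 1/2) (m : ℤ) :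
    0 < (m : ℚ) + δ ↔ 0 < 2 * m + e2d δ := by
  have h := (e2d_cases hδ).2
  rw [← @Int.cast_pos ℚ]
  push_cast
  constructor <;> intro <;> linarith

lemma neg_iff {δ : ℚ} (hδ : δ = 0 ∨ δ = 1/2) (m : ℤ) :
    (m : ℚ) + δ < 0 ↔ 2 * m + e2d δ < 0 := by
  have h := (e2d_cases hδ).2
  rw [← @Int.cast_lt_zero ℚ]
  push_cast
  constructor <;> intro <;> linarith

lemma psi_pos {δ : ℚ} (hδ : δ = 0 ∨ δ = 1/2) {m : ℤ} (hm : 0 < 2 * m + e2d δ) :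
    psiVD δ m = annih m.toNat := by
  refine op_ext fun J => ?_
  rw [psiVD, lift_single, annih_single, psiFunD, if_pos ((pos_iff hδ m).2 hm)]

lemma psi_neg {δ : ℚ} (hδ : δ = 0 ∨ δ = 1/2) {m : ℤ} (hm : 2 * m + e2d δ < 0) :
    psiVD δ m = creat (-m - e2d δ).toNat := by
  refine op_ext fun J => ?_
  rw [psiVD, lift_single, creat_single, psiFunD, if_neg, if_pos ((neg_iff hδ m).2 hm)]
  rw [pos_iff hδ]
  omega

lemma psi_zero {δ : ℚ} (hδ : δ = 0 ∨ δ = 1/2) {m : ℤ} (hm : 2 * m + e2d δ = 0) :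
    psiVD δ m = ((Real.sqrt 2 : ℂ))⁻¹ • (annih 0 + creat 0) := by
  refine op_ext fun J => ?_
  rw [psiVD, lift_single, LinearMap.smul_apply, LinearMap.add_apply, creat_single, annih_single,
    psiFunD, if_neg (by rw [pos_iff hδ]; omega), if_neg (by rw [neg_iff hδ]; omega)]
  by_cases h : 0 ∈ J <;> simp [h, sgn]

lemma sqrt_two_inv_sq : ((Real.sqrt 2 : ℂ))⁻¹ * ((Real.sqrt 2 : ℂ))⁻¹ = 1 / 2 := by
  rw [← mul_inv, ← Complex.ofReal_mul, Real.mul_self_sqrt (by norm_num)]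
  norm_num

/-- The canonical anticommutation relations of the Fermion algebra. -/
lemma psi_psi {δ : ℚ} (hδ : δ = 0 ∨ δ = 1/2) (m n : ℤ) :
    psiVD δ m ∘ₗ psiVD δ n + psiVD δ n ∘ₗ psiVD δ m =
      if m + n + e2d δ = 0 then LinearMap.id else 0 := by
  have he := (e2d_cases hδ).1
  rcases lt_trichotomy (2 * m + e2d δ) 0 with hm | hm | hm <;>
  rcases lt_trichotomy (2 * n + e2d δ) 0 with hn | hn | hn
  · rw [psi_neg hδ hm, psi_neg hδ hn, creat_creat, if_neg (by omega)]
  · rw [psi_neg hδ hm, psi_zero hδ hn, if_neg (by omega)]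
    have h1 := creat_creat (-m - e2d δ).toNat 0
    have h2 := creat_annih (-m - e2d δ).toNat 0
    rw [if_neg (by omega)] at h2
    rw [LinearMap.comp_smul, LinearMap.smul_comp, ← smul_add, LinearMap.comp_add,
      LinearMap.add_comp, add_add_add_comm, h1, h2]
    simp
  · rw [psi_neg hδ hm, psi_pos hδ hn, creat_annih]
    congr 1
    apply propext
    omega
  · rw [psi_zero hδ hm, psi_neg hδ hn, if_neg (by omega)]
    have h1 := creat_creat 0 (-n - e2d δ).toNat
    have h2 := annih_creat 0 (-n - e2d δ).toNat
    rw [if_neg (by omega)] at h2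
    rw [LinearMap.comp_smul, LinearMap.smul_comp, ← smul_add, LinearMap.comp_add,
      LinearMap.add_comp, add_add_add_comm, h1, h2]
    simp
  · rw [psi_zero hδ hm, psi_zero hδ hn, if_pos (by omega)]
    have h1 := creat_creat 0 0
    have h2 := annih_annih 0 0
    have h3 := annih_creat 0 0
    have h4 : (annih 0 + creat 0) ∘ₗ (annih 0 + creat 0) +
        (annih 0 + creat 0) ∘ₗ (annih 0 + creat 0) = (2 : ℂ) • LinearMap.id := by
      calc _ = (creat 0 ∘ₗ creat 0 + creat 0 ∘ₗ creat 0)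
            + (annih 0 ∘ₗ annih 0 + annih 0 ∘ₗ annih 0)
            + (annih 0 ∘ₗ creat 0 + creat 0 ∘ₗ annih 0)
            + (annih 0 ∘ₗ creat 0 + creat 0 ∘ₗ annih 0) := by
              simp only [LinearMap.comp_add, LinearMap.add_comp]
              abel
        _ = _ := by
              rw [h1, h2, h3, if_pos rfl, two_smul]
              abel
    rw [LinearMap.comp_smul, LinearMap.smul_comp, ← smul_add, ← smul_add, h4, smul_smul,
      smul_smul, sqrt_two_inv_sq]
    norm_num
  · rw [psi_zero hδ hm, psi_pos hδ hn, if_neg (by omega)]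
    have h1 := annih_annih 0 n.toNat
    have h2 := creat_annih 0 n.toNat
    rw [if_neg (by omega)] at h2
    rw [LinearMap.comp_smul, LinearMap.smul_comp, ← smul_add, LinearMap.comp_add,
      LinearMap.add_comp, add_add_add_comm, h1, h2]
    simp
  · rw [psi_pos hδ hm, psi_neg hδ hn, annih_creat]
    congr 1
    apply propext
    omega
  · rw [psi_pos hδ hm, psi_zero hδ hn, if_neg (by omega)]
    have h1 := annih_annih m.toNat 0
    have h2 := annih_creat m.toNat 0
    rw [if_neg (by omega)] at h2
    rw [LinearMap.comp_smul, LinearMap.smul_comp, ← smul_add, LinearMap.comp_add,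
      LinearMap.add_comp, add_add_add_comm, h1, h2]
    simp
  · rw [psi_pos hδ hm, psi_pos hδ hn, annih_annih, if_neg (by omega)]

lemma psi_psi_apply {δ : ℚ} (hδ : δ = 0 ∨ δ = 1/2) (m n : ℤ) (v : VV) :
    psiVD δ m (psiVD δ n v) =
      (if m + n + e2d δ = 0 then v else 0) - psiVD δ n (psiVD δ m v) := by
  have h := LinearMap.congr_fun (psi_psi hδ m n) v
  rw [eq_sub_iff_add_eq]
  split_ifs at h ⊢ <;> simpa using h

/-! ### The commutator of `L̄_k` with the fermions -/

/-- The cast to `ℂ` of the mode number `t + δ`. -/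
def modeNum (δ : ℚ) (t : ℤ) : ℂ := (((t : ℚ) + δ : ℚ) : ℂ)

/-- The vacuum eigenvalue `(1 - 2δ)/16` of `L̄_0`. -/
def vacWeight (δ : ℚ) : ℂ := ((1 - 2 * δ : ℚ) : ℂ) / 16

/-- The operator `L̄_k` with its sum cut off at `|t| ≤ N`; on each fixed vector it agrees with
`L̄_k` once `N` is large. -/
def Lcut (δ : ℚ) (k : ℤ) (N : ℕ) : VV →ₗ[ℂ] VV :=
  vacWeight δ • (if k = 0 then LinearMap.id else 0) +
    (1 / 2 : ℂ) • ∑ t ∈ Finset.Icc (-(N : ℤ)) N, modeNum δ t • nopD δ t k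

lemma modeNum_eq {δ : ℚ} (hδ : δ = 0 ∨ δ = 1/2) (t : ℤ) :
    modeNum δ t = (t : ℂ) + (e2d δ : ℂ) / 2 := by
  have h := (e2d_cases hδ).2
  unfold modeNum
  rw [show (t : ℚ) + δ = (t : ℚ) + (e2d δ : ℚ) / 2 by rw [← h]]
  push_cast
  rfl

lemma vacWeight_eq {δ : ℚ} (hδ : δ = 0 ∨ δ = 1/2) :
    vacWeight δ = (1 - (e2d δ : ℂ)) / 16 := by
  rcases hδ with rfl | rfl <;> norm_num [vacWeight, e2d]

lemma nop_eq {δ : ℚ} (hδ : δ = 0 ∨ δ = 1/2) (t k : ℤ) : nopD δ t k =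
    if 0 ≤ k + 2 * t + e2d δ then psiVD δ (-t - e2d δ) ∘ₗ psiVD δ (t + k)
    else - (psiVD δ (t + k) ∘ₗ psiVD δ (-t - e2d δ)) := by
  have h := (e2d_cases hδ).2
  have : 0 ≤ (k : ℚ) + 2 * t + 2 * δ ↔ 0 ≤ k + 2 * t + e2d δ := by
    rw [← @Int.cast_nonneg_iff ℚ]
    push_cast
    constructor <;> intro <;> linarith
  simp only [nopD, this]

lemma psi_kill {δ : ℚ} (hδ : δ = 0 ∨ δ = 1/2) {J : VB} {m : ℤ} (hm : 0 < 2 * m + e2d δ)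
    (h : ((J.sup id : ℕ) : ℤ) < m) : psiVD δ m (Finsupp.single J 1) = 0 := by
  rw [psi_pos hδ hm, annih_single, if_neg]
  intro hJ
  have : m.toNat ≤ J.sup id := Finset.le_sup (f := id) hJ
  omega

lemma nop_kill {δ : ℚ} (hδ : δ = 0 ∨ δ = 1/2) {J : VB} {t k : ℤ}
    (h : ((J.sup id : ℕ) : ℤ) + (k.natAbs : ℤ) + 2 < |t|) :
    nopD δ t k (Finsupp.single J 1) = 0 := by
  have he := (e2d_cases hδ).1
  rw [nop_eq hδ]
  rcases abs_cases t with ⟨h1, h2⟩ | ⟨h1, h2⟩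
  · rw [if_pos (by omega), LinearMap.comp_apply, psi_kill hδ (by omega) (by omega), map_zero]
  · rw [if_neg (by omega), LinearMap.neg_apply, LinearMap.comp_apply,
      psi_kill hδ (by omega) (by omega), map_zero, neg_zero]

lemma Lbar_single {δ : ℚ} (hδ : δ = 0 ∨ δ = 1/2) (k : ℤ) (J : VB) (N : ℕ)
    (hN : J.sup id + k.natAbs + 2 ≤ N) :
    LbarD δ k (Finsupp.single J 1) = Lcut δ k N (Finsupp.single J 1) := by
  rw [LbarD, lift_single, LbarFunD, Lcut]
  simp only [LinearMap.add_apply, LinearMap.smul_apply, LinearMap.sum_apply]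
  congr 2
  · split_ifs <;> simp
  · refine Finset.sum_subset (Finset.Icc_subset_Icc (by omega) (by omega)) fun t _ ht => ?_
    rw [nop_kill hδ, smul_zero]
    rw [Finset.mem_Icc] at ht
    rcases abs_cases t with ⟨h1, h2⟩ | ⟨h1, h2⟩ <;> omega

lemma Lbar_eventually {δ : ℚ} (hδ : δ = 0 ∨ δ = 1/2) (k : ℤ) (v : VV) :
    ∀ᶠ N : ℕ in Filter.atTop, LbarD δ k v = Lcut δ k N v := by
  induction v using Finsupp.induction_linear with
  | zero => exact Filter.Eventually.of_forall fun N => by rw [map_zero, map_zero]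
  | add f g hf hg =>
    filter_upwards [hf, hg] with N h1 h2
    rw [map_add, map_add, h1, h2]
  | single J c =>
    filter_upwards [Filter.eventually_ge_atTop (J.sup id + k.natAbs + 2)] with N hN
    have : Finsupp.single J c = c • Finsupp.single J (1 : ℂ) := by simp
    rw [this, map_smul, map_smul, Lbar_single hδ k J N hN]

lemma psi_psi_comm {δ : ℚ} (hδ : δ = 0 ∨ δ = 1/2) (a b n : ℤ) (v : VV) :
    psiVD δ a (psiVD δ b (psiVD δ n v)) - psiVD δ n (psiVD δ a (psiVD δ b v)) =
      (if b + n + e2d δ = 0 then psiVD δ a v else 0) -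
        (if a + n + e2d δ = 0 then psiVD δ b v else 0) := by
  rw [psi_psi_apply hδ b n, map_sub, psi_psi_apply hδ a n]
  split_ifs <;> (try rw [map_zero]) <;> abel

/-- Normal ordering changes `ψ_{-j}ψ_{j+k}` by a scalar only, so it does not affect the
commutator with a fermion. -/
lemma nop_psi_comm {δ : ℚ} (hδ : δ = 0 ∨ δ = 1/2) (t k n : ℤ) (v : VV) :
    nopD δ t k (psiVD δ n v) - psiVD δ n (nopD δ t k v) =
      (if t = -k - n - e2d δ then psiVD δ (k + n) v else 0) -
        (if t = n then psiVD δ (k + n) v else 0) := by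
  have h1 := psi_psi_comm hδ (-t - e2d δ) (t + k) n v
  have h2 := psi_psi_comm hδ (t + k) (-t - e2d δ) n v
  have e1 : (if t + k + n + e2d δ = 0 then psiVD δ (-t - e2d δ) v else 0) =
      if t = -k - n - e2d δ then psiVD δ (k + n) v else 0 := by
    by_cases h : t = -k - n - e2d δ
    · rw [if_pos h, if_pos (by omega)]
      congr 2
      omega
    · rw [if_neg h, if_neg (by omega)]
  have e2 : (if -t - e2d δ + n + e2d δ = 0 then psiVD δ (t + k) v else 0) =
      if t = n then psiVD δ (k + n) v else 0 := by
    by_cases h : t = n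
    · rw [if_pos h, if_pos (by omega)]
      congr 2
      omega
    · rw [if_neg h, if_neg (by omega)]
  rw [e1, e2] at h1
  rw [e1, e2] at h2
  rw [nop_eq hδ]
  by_cases hk : 0 ≤ k + 2 * t + e2d δ
  · rw [if_pos hk]
    exact h1
  · rw [if_neg hk, ← neg_sub (ite (t = n) _ _), ← h2]
    simp
    abel

lemma Lcut_psi_comm {δ : ℚ} (hδ : δ = 0 ∨ δ = 1/2) (k n : ℤ) (N : ℕ)
    (hN : k.natAbs + n.natAbs + 2 ≤ N) (v : VV) :
    Lcut δ k N (psiVD δ n v) - psiVD δ n (Lcut δ k N v) =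
      (-modeNum δ n - (k : ℂ) / 2) • psiVD δ (k + n) v := by
  have he := (e2d_cases hδ).1
  have key : ∑ t ∈ Finset.Icc (-(N : ℤ)) N, modeNum δ t • (nopD δ t k (psiVD δ n v) -
      psiVD δ n (nopD δ t k v)) =
      (modeNum δ (-k - n - e2d δ) - modeNum δ n) • psiVD δ (k + n) v := by
    simp only [nop_psi_comm hδ, smul_sub, Finset.sum_sub_distrib, smul_ite, smul_zero,
      Finset.sum_ite_eq']
    rw [if_pos (by rw [Finset.mem_Icc]; omega), if_pos (by rw [Finset.mem_Icc]; omega), sub_smul]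
  have h2 : Lcut δ k N (psiVD δ n v) - psiVD δ n (Lcut δ k N v) =
      (1 / 2 : ℂ) • ∑ t ∈ Finset.Icc (-(N : ℤ)) N, modeNum δ t • (nopD δ t k (psiVD δ n v) -
      psiVD δ n (nopD δ t k v)) := by
    simp only [Lcut, LinearMap.add_apply, LinearMap.smul_apply, LinearMap.sum_apply, smul_sub,
      Finset.sum_sub_distrib, map_add, map_smul, map_sum]
    split_ifs
    · simp
    · simp
  rw [h2, key, smul_smul]
  congr 1
  rw [modeNum_eq hδ, modeNum_eq hδ]
  push_cast
  ring

lemma Lbar_psi {δ : ℚ} (hδ : δ = 0 ∨ δ = 1/2) (m n : ℤ) (v : VV) :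
    LbarD δ m (psiVD δ n v) =
      psiVD δ n (LbarD δ m v) + (-modeNum δ n - (m : ℂ) / 2) • psiVD δ (m + n) v := by
  obtain ⟨N, h1, h2, h3⟩ := ((Lbar_eventually hδ m v).and
    ((Lbar_eventually hδ m (psiVD δ n v)).and
      (Filter.eventually_ge_atTop (m.natAbs + n.natAbs + 2)))).exists
  rw [h1, h2, ← Lcut_psi_comm hδ m n N h3 v]
  abel

/-! ### Parity -/

/-- An operator sends the span of the `ξ_J` with `P J` into `W` as soon as it does so on these
basis vectors. -/
lemma map_mem_of_basis (P : VB → Prop) (W : Submodule ℂ VV) (T : VV →ₗ[ℂ] VV)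
    (h : ∀ J, P J → T (Finsupp.single J 1) ∈ W) (v : VV) (hv : ∀ J ∈ v.support, P J) :
    T v ∈ W := by
  have : v = ∑ J ∈ v.support, v J • Finsupp.single J (1 : ℂ) := by
    conv_lhs => rw [← Finsupp.sum_single v]
    simp [Finsupp.sum]
  rw [this, map_sum]
  refine W.sum_mem fun J hJ => ?_
  rw [map_smul]
  exact W.smul_mem _ (h J (hv J hJ))

lemma single_mem_even {J : VB} (h : Even J.card) (c : ℂ) : Finsupp.single J c ∈ evenV := by
  intro K hK
  rw [Finset.mem_singleton.1 (Finsupp.support_single_subset hK)]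
  exact h

lemma single_mem_odd {J : VB} (h : ¬ Even J.card) (c : ℂ) : Finsupp.single J c ∈ oddV := by
  intro K hK
  rw [Finset.mem_singleton.1 (Finsupp.support_single_subset hK)]
  exact h

lemma even_card_insert {J : VB} {a : ℕ} (h : a ∉ J) :
    Even (insert a J).card ↔ ¬ Even J.card := by
  rw [Finset.card_insert_of_notMem h, Nat.even_add_one]

lemma even_card_erase {J : VB} {a : ℕ} (h : a ∈ J) :
    Even (J.erase a).card ↔ ¬ Even J.card := by
  rw [← Finset.card_erase_add_one h, Nat.even_add_one, not_not]

lemma annih_even (a : ℕ) (v : VV) (hv : v ∈ evenV) : annih a v ∈ oddV := by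
  refine map_mem_of_basis (fun J => Even J.card) _ _ (fun J hJ => ?_) v hv
  rw [annih_single]
  split_ifs with h
  · exact oddV.smul_mem _ (single_mem_odd (by rw [even_card_erase h]; simpa using hJ) _)
  · exact oddV.zero_mem

lemma annih_odd (a : ℕ) (v : VV) (hv : v ∈ oddV) : annih a v ∈ evenV := by
  refine map_mem_of_basis (fun J => ¬ Even J.card) _ _ (fun J hJ => ?_) v hv
  rw [annih_single]
  split_ifs with h
  · exact evenV.smul_mem _ (single_mem_even (by rw [even_card_erase h]; exact hJ) _)
  · exact evenV.zero_mem

lemma creat_even (a : ℕ) (v : VV) (hv : v ∈ evenV) : creat a v ∈ oddV := by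
  refine map_mem_of_basis (fun J => Even J.card) _ _ (fun J hJ => ?_) v hv
  rw [creat_single]
  split_ifs with h
  · exact oddV.zero_mem
  · exact oddV.smul_mem _ (single_mem_odd (by rw [even_card_insert h]; simpa using hJ) _)

lemma creat_odd (a : ℕ) (v : VV) (hv : v ∈ oddV) : creat a v ∈ evenV := by
  refine map_mem_of_basis (fun J => ¬ Even J.card) _ _ (fun J hJ => ?_) v hv
  rw [creat_single]
  split_ifs with h
  · exact evenV.zero_mem
  · exact evenV.smul_mem _ (single_mem_even (by rw [even_card_insert h]; exact hJ) _)

lemma psi_even {δ : ℚ} (hδ : δ = 0 ∨ δ = 1/2) (n : ℤ) (v : VV) (hv : v ∈ evenV) :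
    psiVD δ n v ∈ oddV := by
  rcases lt_trichotomy (2 * n + e2d δ) 0 with hn | hn | hn
  · rw [psi_neg hδ hn]
    exact creat_even _ v hv
  · rw [psi_zero hδ hn]
    exact oddV.smul_mem _ (oddV.add_mem (annih_even _ v hv) (creat_even _ v hv))
  · rw [psi_pos hδ hn]
    exact annih_even _ v hv

lemma psi_odd {δ : ℚ} (hδ : δ = 0 ∨ δ = 1/2) (n : ℤ) (v : VV) (hv : v ∈ oddV) :
    psiVD δ n v ∈ evenV := by
  rcases lt_trichotomy (2 * n + e2d δ) 0 with hn | hn | hn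
  · rw [psi_neg hδ hn]
    exact creat_odd _ v hv
  · rw [psi_zero hδ hn]
    exact evenV.smul_mem _ (evenV.add_mem (annih_odd _ v hv) (creat_odd _ v hv))
  · rw [psi_pos hδ hn]
    exact annih_odd _ v hv

/-- A subspace stable under all products of two fermions is stable under every `L̄_k`. -/
lemma Lbar_stable {δ : ℚ} (hδ : δ = 0 ∨ δ = 1/2) (W : Submodule ℂ VV) (v : VV) (hv : v ∈ W)
    (h : ∀ a b : ℤ, psiVD δ a (psiVD δ b v) ∈ W) (k : ℤ) : LbarD δ k v ∈ W := by
  obtain ⟨N, hN⟩ := (Lbar_eventually hδ k v).exists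
  rw [hN, Lcut]
  simp only [LinearMap.add_apply, LinearMap.smul_apply, LinearMap.sum_apply]
  refine W.add_mem (W.smul_mem _ ?_) (W.smul_mem _ (W.sum_mem fun t _ => W.smul_mem _ ?_))
  · split_ifs
    · exact hv
    · exact W.zero_mem
  · unfold nopD
    split_ifs
    · exact h _ _
    · exact W.neg_mem (h _ _)

lemma Lbar_even {δ : ℚ} (hδ : δ = 0 ∨ δ = 1/2) (k : ℤ) (v : VV) (hv : v ∈ evenV) :
    LbarD δ k v ∈ evenV :=
  Lbar_stable hδ _ v hv (fun _ _ => psi_odd hδ _ _ (psi_even hδ _ _ hv)) k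

lemma Lbar_odd {δ : ℚ} (hδ : δ = 0 ∨ δ = 1/2) (k : ℤ) (v : VV) (hv : v ∈ oddV) :
    LbarD δ k v ∈ oddV :=
  Lbar_stable hδ _ v hv (fun _ _ => psi_even hδ _ _ (psi_odd hδ _ _ hv)) k

lemma isCompl_even_odd : IsCompl evenV oddV := by
  constructor
  · rw [Submodule.disjoint_def]
    intro v h1 h2
    ext J
    by_contra h
    exact h2 J (Finsupp.mem_support_iff.2 h) (h1 J (Finsupp.mem_support_iff.2 h))
  · rw [codisjoint_iff, eq_top_iff]
    intro v _
    rw [← Finsupp.filter_add_filter_not v (fun J : VB => Even J.card)]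
    refine Submodule.add_mem_sup (fun J hJ => ?_) (fun J hJ => ?_)
    · rw [Finsupp.support_filter, Finset.mem_filter] at hJ
      exact hJ.2
    · rw [Finsupp.support_filter, Finset.mem_filter] at hJ
      exact hJ.2

/-! ### Vacuum expectation values -/

/-- The vacuum vector `1 = ξ_∅`. -/
def vac : VV := Finsupp.single ∅ 1

lemma vac_empty : vac ∅ = 1 := by simp [vac]

lemma creat_apply_empty (a : ℕ) (v : VV) : creat a v ∅ = 0 := by
  have : Finsupp.lapply ∅ ∘ₗ creat a = (0 : VV →ₗ[ℂ] ℂ) := by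
    refine Finsupp.lhom_ext' fun J => LinearMap.ext_ring ?_
    simp only [LinearMap.comp_apply, Finsupp.lsingle_apply, creat_single]
    by_cases h : a ∈ J <;> simp [h]
  exact LinearMap.congr_fun this v

lemma annih_apply_erase {a : ℕ} {J : VB} (ha : a ∈ J) (v : VV) :
    annih a v (J.erase a) = sgn J a * v J := by
  have : Finsupp.lapply (J.erase a) ∘ₗ annih a =
      sgn J a • (Finsupp.lapply J : VV →ₗ[ℂ] ℂ) := by
    refine Finsupp.lhom_ext' fun K => LinearMap.ext_ring ?_
    simp only [LinearMap.comp_apply, Finsupp.lsingle_apply, annih_single, LinearMap.smul_apply,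
      Finsupp.lapply_apply]
    by_cases h : a ∈ K
    · by_cases hK : K = J
      · subst hK
        simp [h]
      · have : K.erase a ≠ J.erase a := fun h' => hK (by
          rw [← Finset.insert_erase h, h', Finset.insert_erase ha])
        simp [h, hK, this]
    · have : K ≠ J := fun h' => h (h' ▸ ha)
      simp [h, this]
  exact LinearMap.congr_fun this v

lemma psi_apply_empty {δ : ℚ} (hδ : δ = 0 ∨ δ = 1/2) {m : ℤ} (hm : 2 * m + e2d δ < 0) (v : VV) :
    psiVD δ m v ∅ = 0 := by
  rw [psi_neg hδ hm, creat_apply_empty]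

lemma psi_vac {δ : ℚ} (hδ : δ = 0 ∨ δ = 1/2) {m : ℤ} (hm : 0 < 2 * m + e2d δ) :
    psiVD δ m vac = 0 := by
  rw [psi_pos hδ hm, vac, annih_single]
  simp

/-- The Heaviside function with value `1/2` at `0`. -/
def heav (x : ℤ) : ℂ := if 0 < x then 1 else if x = 0 then 1 / 2 else 0

lemma heav_pos {x : ℤ} (h : 0 < x) : heav x = 1 := if_pos h

lemma heav_neg {x : ℤ} (h : x < 0) : heav x = 0 := by
  rw [heav, if_neg (by omega), if_neg (by omega)]

lemma heav_zero : heav 0 = 1 / 2 := by simp [heav]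

/-- The two-point function of the fermions. -/
lemma two_point {δ : ℚ} (hδ : δ = 0 ∨ δ = 1/2) (a b : ℤ) :
    psiVD δ a (psiVD δ b vac) ∅ = if a + b + e2d δ = 0 then heav (2 * a + e2d δ) else 0 := by
  have h := congrArg (fun v : VV => v ∅) (psi_psi_apply hδ a b vac)
  simp only [Finsupp.sub_apply] at h
  rcases lt_trichotomy (2 * a + e2d δ) 0 with ha | ha | ha
  · rw [psi_apply_empty hδ ha, heav_neg ha, ite_self]
  · rcases lt_trichotomy (2 * b + e2d δ) 0 with hb | hb | hb
    · rw [if_neg (by omega)] at h ⊢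
      rw [h, psi_apply_empty hδ hb]
      simp
    · obtain rfl : a = b := by omega
      rw [if_pos (by omega)] at h ⊢
      rw [vac_empty] at h
      rw [ha, heav_zero]
      linear_combination h / 2
    · rw [psi_vac hδ hb, if_neg (by omega)]
      simp
  · rw [psi_vac hδ ha] at h
    rw [h, heav_pos ha]
    split_ifs <;> simp [vac_empty]

lemma modeNum_zero {δ : ℚ} (hδ : δ = 0 ∨ δ = 1/2) {t : ℤ} (h : 2 * t + e2d δ = 0) :
    modeNum δ t = 0 := by
  rw [modeNum_eq hδ]
  have : (2 * t + e2d δ : ℂ) = 0 := by exact_mod_cast h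
  linear_combination this / 2

lemma nop_vac {δ : ℚ} (hδ : δ = 0 ∨ δ = 1/2) {k : ℤ} (hk : 0 ≤ k) (t : ℤ) :
    modeNum δ t • nopD δ t k vac = 0 := by
  rw [nop_eq hδ]
  split_ifs with h
  · by_cases h0 : 0 < 2 * (t + k) + e2d δ
    · rw [LinearMap.comp_apply, psi_vac hδ h0, map_zero, smul_zero]
    · rw [modeNum_zero hδ (by omega), zero_smul]
  · rw [LinearMap.neg_apply, LinearMap.comp_apply, psi_vac hδ (by omega), map_zero, neg_zero,
      smul_zero]

lemma nop_apply_empty {δ : ℚ} (hδ : δ = 0 ∨ δ = 1/2) {k : ℤ} (hk : k ≤ 0) (t : ℤ) (v : VV) :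
    modeNum δ t * nopD δ t k v ∅ = 0 := by
  rw [nop_eq hδ]
  split_ifs with h
  · by_cases h0 : 2 * (-t - e2d δ) + e2d δ < 0
    · rw [LinearMap.comp_apply, psi_apply_empty hδ h0, mul_zero]
    · rw [modeNum_zero hδ (by omega), zero_mul]
  · rw [LinearMap.neg_apply, LinearMap.comp_apply, Finsupp.neg_apply,
      psi_apply_empty hδ (by omega), neg_zero, mul_zero]

lemma Lbar_vac {δ : ℚ} (hδ : δ = 0 ∨ δ = 1/2) {k : ℤ} (hk : 0 ≤ k) :
    LbarD δ k vac = vacWeight δ • if k = 0 then vac else 0 := by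
  obtain ⟨N, hN⟩ := (Lbar_eventually hδ k vac).exists
  rw [hN, Lcut]
  simp only [LinearMap.add_apply, LinearMap.smul_apply, LinearMap.sum_apply, nop_vac hδ hk,
    Finset.sum_const_zero, smul_zero, add_zero]
  split_ifs <;> simp

lemma Lbar_apply_empty {δ : ℚ} (hδ : δ = 0 ∨ δ = 1/2) {k : ℤ} (hk : k ≤ 0) (v : VV) :
    LbarD δ k v ∅ = vacWeight δ * if k = 0 then v ∅ else 0 := by
  obtain ⟨N, hN⟩ := (Lbar_eventually hδ k v).exists
  rw [hN, Lcut]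
  simp only [LinearMap.add_apply, LinearMap.smul_apply, LinearMap.sum_apply, Finsupp.add_apply,
    Finsupp.smul_apply, Finsupp.finsetSum_apply, smul_eq_mul, nop_apply_empty hδ hk,
    Finset.sum_const_zero, mul_zero, add_zero]
  split_ifs <;> simp

lemma nop_of_ne {δ : ℚ} (hδ : δ = 0 ∨ δ = 1/2) {k : ℤ} (hk : k ≠ 0) (t : ℤ) (v : VV) :
    nopD δ t k v = psiVD δ (-t - e2d δ) (psiVD δ (t + k) v) := by
  rw [nop_eq hδ]
  split_ifs
  · rfl
  · rw [LinearMap.neg_apply, LinearMap.comp_apply, psi_psi_apply hδ, if_neg (by omega)]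
    simp

lemma sum_zero_case (x : ℂ) (n : ℕ) : ∑ i ∈ Finset.range n, (i : ℂ) * (i - x / 2) =
    n * (n - 1) * (2 * n - 1) / 6 - x * n * (n - 1) / 4 := by
  induction n with
  | zero => simp
  | succ n ih =>
    rw [Finset.sum_range_succ, ih]
    push_cast
    ring

lemma sum_half_case (x : ℂ) (n : ℕ) :
    ∑ i ∈ Finset.range n, ((i : ℂ) + 1 / 2) * (i + 1 / 2 - x / 2) =
      n * (4 * n ^ 2 - 1) / 12 - x * n ^ 2 / 4 := by
  induction n with
  | zero => simp
  | succ n ih =>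
    rw [Finset.sum_range_succ, ih]
    push_cast
    ring

/-- The sum which produces the central charge: only the modes `0 < j < M`, and `j = M` with
weight `1/2`, contribute. -/
lemma central_sum {δ : ℚ} (hδ : δ = 0 ∨ δ = 1/2) (M : ℕ) (hM : 0 < M) :
    ∑ t ∈ Finset.Icc (-((M + 2 : ℕ) : ℤ)) ((M + 2 : ℕ) : ℤ), modeNum δ t *
      ((modeNum δ t - M / 2) *
        (heav (2 * (M - t) - e2d δ) - heav (-2 * t - e2d δ))) =
      ((M : ℂ) ^ 3 - M) / 12 + 4 * M * vacWeight δ := by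
  have he := (e2d_cases hδ).1
  set f : ℤ → ℂ := fun t => modeNum δ t * ((modeNum δ t - M / 2) *
        (heav (2 * (M - t) - e2d δ) - heav (-2 * t - e2d δ))) with hf
  have h1 : ∑ t ∈ Finset.Icc (-((M + 2 : ℕ) : ℤ)) ((M + 2 : ℕ) : ℤ), f t =
      ∑ i ∈ Finset.range (M + 1), f (i : ℤ) := by
    rw [← Finset.sum_image (f := f) (g := fun i : ℕ => (i : ℤ)) (fun a _ b _ h => by simpa using h)]
    symm
    refine Finset.sum_subset (fun t ht => ?_) (fun t _ ht => ?_)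
    · simp only [Finset.mem_image, Finset.mem_range] at ht
      rw [Finset.mem_Icc]
      omega
    · have ht' : t < 0 ∨ (M : ℤ) < t := by
        by_contra! h
        exact ht (Finset.mem_image.2 ⟨t.toNat, Finset.mem_range.2 (by omega), by omega⟩)
      simp only [hf]
      rcases ht' with h | h
      · rw [heav_pos (by omega), heav_pos (by omega)]
        ring
      · rw [heav_neg (by omega), heav_neg (by omega)]
        ring
  have h2 : ∀ i ∈ Finset.range M, f (i : ℤ) = modeNum δ i * (modeNum δ i - M / 2) := by
    intro i hi
    rw [Finset.mem_range] at hi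
    simp only [hf]
    rw [heav_pos (by omega)]
    by_cases h0 : 2 * (i : ℤ) + e2d δ = 0
    · rw [modeNum_zero hδ h0]
      ring
    · rw [heav_neg (by omega)]
      ring
  rw [h1, Finset.sum_range_succ, Finset.sum_congr rfl h2]
  simp only [hf]
  rw [heav_neg (x := -2 * (M : ℤ) - e2d δ) (by omega), vacWeight_eq hδ]
  simp only [modeNum_eq hδ]
  rcases he with he | he <;> rw [he]
  · have := sum_zero_case M M
    simp only [Int.cast_natCast, Int.cast_zero, zero_div, add_zero, sub_self, mul_zero, sub_zero,
      heav_zero, this]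
    ring
  · have := sum_half_case M M
    rw [heav_neg (by omega)]
    simp only [Int.cast_natCast, Int.cast_one, sub_self, mul_zero, add_zero, this]
    ring

lemma expect_L_psi_psi {δ : ℚ} (hδ : δ = 0 ∨ δ = 1/2) {m : ℤ} (hm : 0 < m) (a b : ℤ) :
    LbarD δ m (psiVD δ a (psiVD δ b vac)) ∅ =
      (-modeNum δ a - (m : ℂ) / 2) * (psiVD δ (m + a) (psiVD δ b vac)) ∅ +
      (-modeNum δ b - (m : ℂ) / 2) * (psiVD δ a (psiVD δ (m + b) vac)) ∅ := by
  rw [Lbar_psi hδ, Lbar_psi hδ, Lbar_vac hδ hm.le, if_neg hm.ne']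
  simp
  ring

lemma expect_pos_neg {δ : ℚ} (hδ : δ = 0 ∨ δ = 1/2) {m n : ℤ} (hm : 0 < m) (hn : n < 0) :
    LbarD δ m (LbarD δ n vac) ∅ =
      if m + n = 0 then ((m : ℂ) ^ 3 - m) / 24 + 2 * m * vacWeight δ else 0 := by
  have h1 : LbarD δ n vac = Lcut δ n (n.natAbs + 2) vac :=
    Lbar_single hδ n ∅ _ (by simp)
  have h2 : LbarD δ m (LbarD δ n vac) ∅ = (1 / 2 : ℂ) *
      ∑ t ∈ Finset.Icc (-((n.natAbs + 2 : ℕ) : ℤ)) ((n.natAbs + 2 : ℕ) : ℤ), modeNum δ t *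
        LbarD δ m (psiVD δ (-t - e2d δ) (psiVD δ (t + n) vac)) ∅ := by
    rw [h1, Lcut, if_neg hn.ne]
    simp only [LinearMap.add_apply, LinearMap.smul_apply, LinearMap.sum_apply, map_add, map_smul,
      map_sum, Finsupp.add_apply, Finsupp.smul_apply, Finsupp.finsetSum_apply, smul_eq_mul,
      nop_of_ne hδ hn.ne, LinearMap.zero_apply, map_zero, Finsupp.zero_apply, mul_zero, zero_add]
  rw [h2]
  simp only [expect_L_psi_psi hδ hm, two_point hδ]
  split_ifs with hmn
  · obtain ⟨M, rfl⟩ := Int.eq_ofNat_of_zero_le hm.le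
    obtain rfl : n = -(M : ℤ) := by omega
    have hs := central_sum hδ M (by omega)
    have : ((M : ℤ) : ℂ) = M := by simp
    rw [this]
    rw [show ((M : ℂ) ^ 3 - M) / 24 + 2 * M * vacWeight δ =
      1 / 2 * (((M : ℂ) ^ 3 - M) / 12 + 4 * M * vacWeight δ) by ring, ← hs]
    rw [Int.natAbs_neg, Int.natAbs_natCast]
    congr 1
    refine Finset.sum_congr rfl fun t _ => ?_
    rw [if_pos (by ring), if_pos (by ring)]
    rw [show 2 * ((M : ℤ) + (-t - e2d δ)) + e2d δ = 2 * (M - t) - e2d δ by ring,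
      show 2 * (-t - e2d δ) + e2d δ = -2 * t - e2d δ by ring]
    simp only [modeNum_eq hδ]
    push_cast
    ring
  · convert mul_zero _
    refine Finset.sum_eq_zero fun t _ => ?_
    rw [if_neg (by omega), if_neg (by omega)]
    ring

lemma expect_LL {δ : ℚ} (hδ : δ = 0 ∨ δ = 1/2) (m n : ℤ) :
    LbarD δ m (LbarD δ n vac) ∅ =
      (if m = 0 ∧ n = 0 then vacWeight δ ^ 2 else 0) +
      if m + n = 0 ∧ 0 < m then ((m : ℂ) ^ 3 - m) / 24 + 2 * m * vacWeight δ else 0 := by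
  rcases le_or_gt 0 n with hn | hn
  · rw [Lbar_vac hδ hn, if_neg (c := m + n = 0 ∧ 0 < m) (by omega)]
    by_cases h0 : n = 0
    · subst h0
      rcases le_or_gt m 0 with hm | hm
      · rw [if_pos rfl, map_smul, Finsupp.smul_apply, Lbar_apply_empty hδ hm, vac_empty]
        by_cases h : m = 0 <;> simp [h]
        ring
      · rw [if_pos rfl, map_smul, Finsupp.smul_apply, Lbar_vac hδ hm.le]
        simp [hm.ne']
    · simp [h0]
  · rw [if_neg (c := m = 0 ∧ n = 0) (by omega), zero_add]
    rcases le_or_gt m 0 with hm | hm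
    · rw [Lbar_apply_empty hδ hm, Lbar_apply_empty hδ hn.le, if_neg hn.ne,
        if_neg (c := m + n = 0 ∧ 0 < m) (by omega)]
      simp
    · rw [expect_pos_neg hδ hm hn]
      simp [hm]

/-! ### Irreducibility and the Virasoro relation -/

lemma exists_psi_insert {δ : ℚ} (hδ : δ = 0 ∨ δ = 1/2) {J : VB} {a : ℕ} (ha : a ∉ J) :
    ∃ (c : ℂ) (n : ℤ),
      Finsupp.single (insert a J) (1 : ℂ) = c • psiVD δ n (Finsupp.single J 1) := by
  have he := (e2d_cases hδ).1
  by_cases h : 2 * (a : ℤ) + e2d δ = 0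
  · refine ⟨(Real.sqrt 2 : ℂ), a, ?_⟩
    obtain rfl : a = 0 := by omega
    have h2 : (Real.sqrt 2 : ℂ) ≠ 0 := by simp
    rw [psi_zero hδ h, LinearMap.smul_apply, smul_smul, mul_inv_cancel₀ h2, one_smul,
      LinearMap.add_apply, annih_single, creat_single, if_neg ha, if_neg ha]
    simp [sgn]
  · refine ⟨sgn J a, -(a : ℤ) - e2d δ, ?_⟩
    rw [psi_neg hδ (by omega), show (-(-(a : ℤ) - e2d δ) - e2d δ).toNat = a by omega,
      creat_single, if_neg ha, smul_smul, sgn_sq, one_smul]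

/-- Schur's lemma for `𝒱(δ)`: an even operator commuting with all fermions is a scalar, namely its
vacuum expectation value.  It maps the vacuum to a vector annihilated by all `ψ_n` with positive
mode number, and the vacuum generates `𝒱(δ)`. -/
lemma scalar_of_comm {δ : ℚ} (hδ : δ = 0 ∨ δ = 1/2) (D : VV →ₗ[ℂ] VV)
    (hD : ∀ (n : ℤ) (v : VV), D (psiVD δ n v) = psiVD δ n (D v)) (hev : D vac ∈ evenV) :
    D = (D vac ∅) • LinearMap.id := by
  have he := (e2d_cases hδ).1
  have hvac : D vac = (D vac ∅) • vac := by
    ext J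
    by_cases hJ : J = ∅
    · subst hJ
      simp [vac_empty]
    · have h0 : D vac J = 0 := by
        by_contra hne
        have hcard : Even J.card := hev J (Finsupp.mem_support_iff.2 hne)
        have hpos := Finset.card_pos.2 (Finset.nonempty_iff_ne_empty.2 hJ)
        have hone : 1 < J.card := by
          obtain ⟨r, hr⟩ := hcard
          omega
        obtain ⟨a, ha, ha0⟩ := Finset.exists_mem_ne hone 0
        have hp : 0 < 2 * (a : ℤ) + e2d δ := by omega
        have h1 := hD a vac
        rw [psi_vac hδ hp, map_zero, psi_pos hδ hp, Int.toNat_natCast] at h1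
        have h2 := annih_apply_erase ha (D vac)
        rw [← h1, Finsupp.zero_apply] at h2
        rcases mul_eq_zero.1 h2.symm with h | h
        · have := sgn_sq J a
          rw [h] at this
          simp at this
        · exact hne h
      rw [h0]
      simp [vac, Ne.symm hJ]
  refine op_ext fun J => ?_
  rw [LinearMap.smul_apply, LinearMap.id_apply]
  induction J using Finset.induction_on with
  | empty => exact hvac
  | insert a J ha ih =>
    obtain ⟨c, n, h⟩ := exists_psi_insert hδ ha
    rw [h, map_smul, hD, ih, map_smul, smul_comm]

/-- The defect `[L̄_m, L̄_n] - (m - n) L̄_{m+n}` of the Witt relation. -/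
def defect (δ : ℚ) (m n : ℤ) : VV →ₗ[ℂ] VV :=
  LbarD δ m ∘ₗ LbarD δ n - LbarD δ n ∘ₗ LbarD δ m - ((m : ℂ) - (n : ℂ)) • LbarD δ (m + n)

lemma defect_psi {δ : ℚ} (hδ : δ = 0 ∨ δ = 1/2) (m n r : ℤ) (v : VV) :
    defect δ m n (psiVD δ r v) = psiVD δ r (defect δ m n v) := by
  simp only [defect, LinearMap.sub_apply, LinearMap.smul_apply, LinearMap.comp_apply,
    Lbar_psi hδ, map_add, map_sub, map_smul]
  rw [show m + (n + r) = m + n + r by ring, show n + (m + r) = m + n + r by ring]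
  simp only [modeNum_eq hδ]
  push_cast
  module

lemma defect_eq {δ : ℚ} (hδ : δ = 0 ∨ δ = 1/2) (m n : ℤ) :
    defect δ m n = (if m + n = 0 then ((m : ℂ) ^ 3 - m) / 24 else 0) • LinearMap.id := by
  have hv : vac ∈ evenV := single_mem_even (by simp) _
  have hev : defect δ m n vac ∈ evenV :=
    evenV.sub_mem (evenV.sub_mem (Lbar_even hδ _ _ (Lbar_even hδ _ _ hv))
      (Lbar_even hδ _ _ (Lbar_even hδ _ _ hv))) (evenV.smul_mem _ (Lbar_even hδ _ _ hv))
  rw [scalar_of_comm hδ _ (defect_psi hδ m n) hev]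
  congr 1
  have hL : LbarD δ (m + n) vac ∅ = if m + n = 0 then vacWeight δ else 0 := by
    rcases le_or_gt 0 (m + n) with h | h
    · rw [Lbar_vac hδ h]
      split_ifs <;> simp [vac_empty]
    · rw [Lbar_apply_empty hδ h.le, if_neg h.ne, if_neg h.ne, mul_zero]
  simp only [defect, LinearMap.sub_apply, LinearMap.smul_apply, LinearMap.comp_apply,
    Finsupp.sub_apply, Finsupp.smul_apply, expect_LL hδ, hL, smul_eq_mul]
  by_cases hmn : m + n = 0
  · obtain rfl : n = -m := by omega
    rcases lt_trichotomy m 0 with h | rfl | h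
    · simp [h.ne, h, not_lt.mpr h.le]
      ring
    · simp
    · simp [h.ne', h, not_lt.mpr h.le]
      ring
  · have : n + m ≠ 0 := by omega
    simp only [hmn, this, false_and, if_false]
    rw [if_neg (by omega), if_neg (by omega)]
    ring

lemma Lbar_Lbar {δ : ℚ} (hδ : δ = 0 ∨ δ = 1/2) (m n : ℤ) :
    LbarD δ m ∘ₗ LbarD δ n - LbarD δ n ∘ₗ LbarD δ m =
      ((m : ℂ) - (n : ℂ)) • LbarD δ (m + n) +
        (if m + n = 0 then (((m : ℂ) ^ 3 - (m : ℂ)) / 24) • (LinearMap.id : VV →ₗ[ℂ] VV)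
         else 0) := by
  refine LinearMap.ext fun v => sub_eq_iff_eq_add'.1 ?_
  refine (LinearMap.congr_fun (defect_eq hδ m n) v).trans ?_
  split_ifs <;> simp

lemma Lbar_psi_comm {δ : ℚ} (hδ : δ = 0 ∨ δ = 1/2) (m n : ℤ) :
    LbarD δ m ∘ₗ psiVD δ n - psiVD δ n ∘ₗ LbarD δ m =
      (-((((n : ℚ) + δ : ℚ) : ℂ)) - (m : ℂ) / 2) • psiVD δ (m + n) := by
  refine LinearMap.ext fun v => sub_eq_iff_eq_add'.2 ?_
  exact Lbar_psi hδ m n v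

/-- **Statement 10** (Lemma 4.1).  For `δ = 0` or `1/2`, the vertex operators
`L̄_k = (1-2δ)/16·δ_{k,0} + (1/2)Σ_{j∈ℤ+δ} j :ψ_{-j}ψ_{j+k}:`, together with
`c = 1/2` and `z = 1`, make the exterior algebra `𝒱(δ)` into an `S(δ)`-module;
in particular
`[L̄_m, L̄_n] = (m-n)L̄_{m+n} + δ_{m,-n}(m³-m)/24` and
`[L̄_m, ψ_n] = (-n - m/2)ψ_{m+n}` (for `n ∈ ℤ + δ`). -/
theorem statement10 (δ : ℚ) (hδ : δ = 0 ∨ δ = 1/2) :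
    (∀ m n : ℤ, LbarD δ m ∘ₗ LbarD δ n - LbarD δ n ∘ₗ LbarD δ m =
      ((m : ℂ) - (n : ℂ)) • LbarD δ (m + n) +
        (if m + n = 0 then (((m : ℂ) ^ 3 - (m : ℂ)) / 24) • (LinearMap.id : VV →ₗ[ℂ] VV)
         else 0)) ∧
    (∀ m n : ℤ, LbarD δ m ∘ₗ psiVD δ n - psiVD δ n ∘ₗ LbarD δ m =
      (-((((n : ℚ) + δ : ℚ) : ℂ)) - (m : ℂ) / 2) • psiVD δ (m + n)) ∧
    (∃ ρ : SdRepOn δ VV, ρ.L = LbarD δ ∧ ρ.ψ = psiVD δ ∧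
      ρ.c = (1 / 2 : ℂ) • LinearMap.id ∧ ρ.z = LinearMap.id ∧
      ρ.even = evenV ∧ ρ.odd = oddV) := by
  have he := e2d_cases hδ
  refine ⟨Lbar_Lbar hδ, Lbar_psi_comm hδ, ?_⟩
  refine ⟨{
    L := LbarD δ
    ψ := psiVD δ
    c := (1 / 2 : ℂ) • LinearMap.id
    z := LinearMap.id
    even := evenV
    odd := oddV
    isCompl_even_odd := isCompl_even_odd
    L_maps_even := Lbar_even hδ
    L_maps_odd := Lbar_odd hδ
    ψ_maps_even := psi_even hδ
    ψ_maps_odd := psi_odd hδ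
    c_maps_even := fun v hv => evenV.smul_mem _ hv
    c_maps_odd := fun v hv => oddV.smul_mem _ hv
    z_maps_even := fun v hv => hv
    z_maps_odd := fun v hv => hv
    rel_LL := fun m n => ?_
    rel_Lψ := Lbar_psi_comm hδ
    rel_ψψ := fun m n => ?_
    c_comm_L := fun m => by rw [LinearMap.smul_comp, LinearMap.comp_smul]; rfl
    c_comm_ψ := fun m => by rw [LinearMap.smul_comp, LinearMap.comp_smul]; rfl
    z_comm_L := fun m => rfl
    z_comm_ψ := fun m => rfl
    c_comm_z := rfl }, rfl, rfl, rfl, rfl, rfl, rfl⟩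
  · rw [Lbar_Lbar hδ, smul_smul]
    congr 3
    ring
  · have h : ((m : ℚ) + δ) + ((n : ℚ) + δ) = 0 ↔ m + n + e2d δ = 0 := by
      rw [← @Int.cast_inj ℚ]
      push_cast
      constructor <;> intro <;> linarith [he.2]
    simp only [psi_psi hδ, h]

end
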